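/- Every continuously differentiable invariant of the KdV symmetry algebra is a function of a₄ alone: if φ : ℝ⁴ → ℝ is C¹ and satisfies, for every a = (a₁,a₂,a₃,a₄) ∈ ℝ⁴, the four equations a₄·∂φ/∂a₁ = 0, a₃·∂φ/∂a₁ + 3a₄·∂φ/∂a₂ = 0, a₂·∂φ/∂a₁ + 2a₄·∂φ/∂a₃ = 0, and a₁·∂φ/∂a₁ + 3a₂·∂φ/∂a₂ − 2a₃·∂φ/∂a₃ = 0, then φ(a₁,a₂,a₃,a₄) = φ(0,0,0,a₄) for all (a₁,a₂,a₃,a₄) ∈ ℝ⁴. -/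

import Mathlib

/-!
Where `a 3 ≠ 0`, the first three equations force the partial derivatives in directions
`0`, `1`, `2` to vanish, so `φ` is constant along the segment from `(0, 0, 0, a 3)` to `a`,
on which the last coordinate does not change (`eq_of_pd_eq_zero`). The set `{a | a 3 ≠ 0}` is
dense and `φ` is continuous, so the identity extends to the hyperplane `a 3 = 0`, where the
equations by themselves say much less.
-/

/-- the partial derivative ∂φ/∂aᵢ of a function φ : ℝ⁴ → ℝ -/
noncomputable def pd (φ : (Fin 4 → ℝ) → ℝ) (i : Fin 4) (a : Fin 4 → ℝ) : ℝ :=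
  fderiv ℝ φ a (Pi.single i 1)

theorem eq_of_pd_eq_zero {φ : (Fin 4 → ℝ) → ℝ} (hφ : Differentiable ℝ φ) (a : Fin 4 → ℝ)
    (h : ∀ b : Fin 4 → ℝ, b 3 = a 3 → pd φ 0 b = 0 ∧ pd φ 1 b = 0 ∧ pd φ 2 b = 0) :
    φ a = φ ![0, 0, 0, a 3] := by
  set v : Fin 4 → ℝ := ![a 0, a 1, a 2, 0] with hv
  set w : Fin 4 → ℝ := ![0, 0, 0, a 3] with hw
  have hvs : v = a 0 • Pi.single 0 1 + a 1 • Pi.single 1 1 + a 2 • Pi.single 2 1 := by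
    ext i
    fin_cases i <;> simp [hv]
  have hd : ∀ t : ℝ, HasDerivAt (fun t : ℝ => φ (t • v + w)) 0 t := by
    intro t
    have hp : HasDerivAt (fun t : ℝ => t • v + w) v t := by
      simpa using ((hasDerivAt_id t).smul_const v).add_const w
    have hc := (hφ (t • v + w)).hasFDerivAt.comp_hasDerivAt t hp
    have hz : fderiv ℝ φ (t • v + w) v = 0 := by
      obtain ⟨h0, h1, h2⟩ := h (t • v + w) (by simp [hv, hw])
      simp only [pd] at h0 h1 h2
      generalize fderiv ℝ φ (t • v + w) = L at *
      simp [hvs, h0, h1, h2]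
    rw [hz] at hc
    exact hc
  have hconst := is_const_of_deriv_eq_zero (fun t => (hd t).differentiableAt)
    (fun t => (hd t).deriv) 1 0
  have hend : v + w = a := by
    ext i
    fin_cases i <;> simp [hv, hw]
  simpa [hend] using hconst

theorem kdv_invariant_depends_only_on_a4 (φ : (Fin 4 → ℝ) → ℝ)
    (hφ : ContDiff ℝ 1 φ)
    (h1 : ∀ a : Fin 4 → ℝ, a 3 * pd φ 0 a = 0)
    (h2 : ∀ a : Fin 4 → ℝ, a 2 * pd φ 0 a + 3 * a 3 * pd φ 1 a = 0)
    (h3 : ∀ a : Fin 4 → ℝ, a 1 * pd φ 0 a + 2 * a 3 * pd φ 2 a = 0)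
    (h4 : ∀ a : Fin 4 → ℝ,
      a 0 * pd φ 0 a + 3 * a 1 * pd φ 1 a - 2 * a 2 * pd φ 2 a = 0) :
    ∀ a : Fin 4 → ℝ, φ a = φ ![0, 0, 0, a 3] := by
  have hne : ∀ a ∈ {a : Fin 4 → ℝ | a 3 ≠ 0}, φ a = φ ![0, 0, 0, a 3] := by
    intro a ha
    refine eq_of_pd_eq_zero (hφ.differentiable (by norm_num)) a fun b hb => ?_
    have hb3 : b 3 ≠ 0 := hb ▸ ha
    have e0 : pd φ 0 b = 0 := by simpa [hb3] using h1 b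
    have e1 : pd φ 1 b = 0 := by simpa [hb3, e0] using h2 b
    have e2 : pd φ 2 b = 0 := by simpa [hb3, e0] using h3 b
    exact ⟨e0, e1, e2⟩
  have hdense : Dense {a : Fin 4 → ℝ | a 3 ≠ 0} :=
    (dense_compl_singleton (0 : ℝ)).preimage (isOpenMap_eval (3 : Fin 4))
  have hcont : Continuous fun a : Fin 4 → ℝ => φ ![0, 0, 0, a 3] :=
    hφ.continuous.comp (by fun_prop)
  exact congrFun (Continuous.ext_on hdense hφ.continuous hcont hne)
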